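/- Let s ≥ 2 be a real number, A an n × d real matrix, g ∈ ℝ^n, and R̃ an n × n diagonal matrix with nonnegative entries. Define f : ℝ^d → ℝ by f(x) = ⟨g, Ax⟩ + (Ax)ᵀ R̃ (Ax) + ‖Ax‖_s^s, and let x* be a global minimizer of f. Then for every x ∈ ℝ^d, ‖A(x − x*)‖_s^s ≤ 2^{s+1} (f(x) − f(x*)); in particular ‖A(x − x*)‖_s ≤ 4 (f(x) − f(x*))^{1/s}. -/

import Mathlib

/-!
The proof is a uniform convexity argument. For `s ≥ 2` Clarkson's inequality says
`|(a + b) / 2| ^ s + |(a - b) / 2| ^ s ≤ (|a| ^ s + |b| ^ s) / 2` for real `a`, `b`. Adding it over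
the coordinates, and using that the linear part of `f` is affine and the quadratic part convex,
the midpoint `m` of `x` and `xstar` satisfies
`f m + 2⁻ˢ * ∑ i, |(A (x - xstar)) i| ^ s ≤ (f x + f xstar) / 2`.
Since `f xstar ≤ f m`, it follows that `∑ i, |(A (x - xstar)) i| ^ s ≤ 2 ^ s * (f x - f xstar) / 2`,
which is stronger than both required bounds.
-/

open Finset

/-- The ℓ_s "norm" for real exponent s: ‖u‖_s = (Σ_i |u_i|^s)^(1/s). -/
noncomputable def lpNorm {n : ℕ} (s : ℝ) (u : Fin n → ℝ) : ℝ :=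
  (∑ i, |u i| ^ s) ^ (1 / s)

/-- Clarkson's inequality for real numbers and exponent at least 2. With `p = s / 2 ≥ 1`, it is
superadditivity of `t ↦ t ^ p` followed by its convexity, applied to squares: the squares of
`(a + b) / 2` and `(a - b) / 2` add up to `(a ^ 2 + b ^ 2) / 2`. -/
theorem clarkson_real (s : ℝ) (hs : 2 ≤ s) (a b : ℝ) :
    |(a + b) / 2| ^ s + |(a - b) / 2| ^ s ≤ (|a| ^ s + |b| ^ s) / 2 := by
  have abs_rpow (t : ℝ) : |t| ^ s = (t ^ 2) ^ (s / 2) := by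
    rw [← sq_abs, ← Real.rpow_natCast, ← Real.rpow_mul (abs_nonneg t)]
    congr 1
    push_cast
    ring
  simp only [abs_rpow]
  have hp : 1 ≤ s / 2 := by linarith
  have superadd := Real.add_rpow_le_rpow_add (sq_nonneg ((a + b) / 2))
    (sq_nonneg ((a - b) / 2)) hp
  have conv := (convexOn_rpow hp).2 (Set.mem_Ici.mpr (sq_nonneg a)) (Set.mem_Ici.mpr (sq_nonneg b))
    one_half_pos.le one_half_pos.le (add_halves (1 : ℝ))
  simp only [smul_eq_mul] at conv
  have parallelogram : ((a + b) / 2) ^ 2 + ((a - b) / 2) ^ 2 = 1 / 2 * a ^ 2 + 1 / 2 * b ^ 2 := by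
    ring
  rw [parallelogram] at superadd
  linarith

theorem stmt11 {n d : ℕ} (s : ℝ) (hs : 2 ≤ s)
    (A : Matrix (Fin n) (Fin d) ℝ) (g : Fin n → ℝ)
    (Rt : Fin n → ℝ) (hRt : ∀ i, 0 ≤ Rt i)
    (f : (Fin d → ℝ) → ℝ)
    (hf : ∀ x, f x = (∑ i, g i * A.mulVec x i)
        + (∑ i, Rt i * (A.mulVec x i) ^ 2)
        + ∑ i, |A.mulVec x i| ^ s)
    (xstar : Fin d → ℝ) (hmin : ∀ y, f xstar ≤ f y)
    (x : Fin d → ℝ) :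
    (lpNorm s (A.mulVec (x - xstar))) ^ s ≤ 2 ^ (s + 1) * (f x - f xstar) ∧
      lpNorm s (A.mulVec (x - xstar)) ≤ 4 * (f x - f xstar) ^ (1 / s) := by
  have hs0 : 0 < s := by linarith
  have hgap : 0 ≤ f x - f xstar := sub_nonneg.mpr (hmin x)
  have h2s : (0 : ℝ) < 2 ^ s := by positivity
  have hS : 0 ≤ ∑ i, |A.mulVec (x - xstar) i| ^ s := by positivity
  have midpoint_bound : f ((1 / 2 : ℝ) • (x + xstar))
      + (∑ i, |A.mulVec (x - xstar) i| ^ s) / 2 ^ s ≤ (f x + f xstar) / 2 := by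
    rw [hf, hf, hf]
    simp only [Finset.sum_div, ← Finset.sum_add_distrib]
    refine Finset.sum_le_sum fun i _ => ?_
    simp only [Matrix.mulVec_smul, Matrix.mulVec_add, Matrix.mulVec_sub, Pi.smul_apply,
      Pi.add_apply, Pi.sub_apply, smul_eq_mul]
    generalize A.mulVec x i = a
    generalize A.mulVec xstar i = b
    have hc := clarkson_real s hs a b
    have hdiff : |(a - b) / 2| ^ s = |a - b| ^ s / 2 ^ s := by
      rw [abs_div, abs_two, Real.div_rpow (abs_nonneg _) zero_le_two]
    rw [hdiff] at hc
    have hmid : 1 / 2 * (a + b) = (a + b) / 2 := by ring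
    rw [hmid]
    have hquad := mul_nonneg (hRt i) (sq_nonneg (a - b))
    linarith
  have hsum : ∑ i, |A.mulVec (x - xstar) i| ^ s ≤ 2 ^ s * (f x - f xstar) := by
    rw [← div_le_iff₀' h2s]
    have := hmin ((1 / 2 : ℝ) • (x + xstar))
    linarith
  constructor
  · rw [lpNorm, ← Real.rpow_mul hS, one_div_mul_cancel hs0.ne', Real.rpow_one,
      Real.rpow_add_one two_ne_zero]
    have := mul_nonneg h2s.le hgap
    linarith
  · have hroot : lpNorm s (A.mulVec (x - xstar)) ≤ 2 * (f x - f xstar) ^ (1 / s) := by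
      refine (Real.rpow_le_rpow hS hsum (by positivity)).trans_eq ?_
      rw [Real.mul_rpow h2s.le hgap, ← Real.rpow_mul zero_le_two, mul_one_div_cancel hs0.ne',
        Real.rpow_one]
    have := Real.rpow_nonneg hgap (1 / s)
    linarith
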